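/- Let n ≥ 2 and let m = 2m₀ be even with m₀ ≥ 1. Let H be a Hankel tensor of order m and dimension n with parameter vector h ∈ ℂ^{d+1}, d = (n−1)m, let s = d/2 = (n−1)m₀, and let r = rank C_{d−s,s}(h). Suppose r < s+1, the kernel of C_{d−r,r}(h) is nonzero, and every nonzero f = (f_0,…,f_r) ∈ ker C_{d−r,r}(h) has binary form f(x,y) = f_0 x^r + ⋯ + f_r y^r that is NOT squarefree as a homogeneous polynomial in ℂ[x,y]. Then rank_V(H) = d−r+2, brank_V(H) = brank_S(H) = brank(H) = r, and r ≤ rank_S(H) ≤ d−r+2. -/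

import Mathlib

open scoped BigOperators
open MvPolynomial

noncomputable section

/-- An order-`m`, dimension-`n` complex tensor. -/
abbrev Tensor (m n : ℕ) := (Fin m → Fin n) → ℂ

/-- Tensors expressible as a sum of `r` rank-one tensors. -/
def cpSet (m n r : ℕ) : Set (Tensor m n) :=
  {T | ∃ u : Fin r → Fin m → Fin n → ℂ, ∀ i, T i = ∑ k, ∏ j, u k j (i j)}

/-- Tensors expressible as a sum of `r` symmetric rank-one tensors. -/
def symSet (m n r : ℕ) : Set (Tensor m n) :=
  {T | ∃ v : Fin r → Fin n → ℂ, ∀ i, T i = ∑ k, ∏ j, v k (i j)}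

/-- The Vandermonde vector `v(a,b) ∈ ℂ^n`, `v(a,b)_i = a^(n-1-i) * b^i`. -/
def vand (n : ℕ) (a b : ℂ) : Fin n → ℂ := fun i => a ^ (n - 1 - (i : ℕ)) * b ^ (i : ℕ)

/-- Tensors expressible as a sum of `r` Vandermonde rank-one tensors. -/
def vandSet (m n r : ℕ) : Set (Tensor m n) :=
  {T | ∃ ab : Fin r → ℂ × ℂ, ∀ i, T i = ∑ k, ∏ j, vand n (ab k).1 (ab k).2 (i j)}

/-- The cp rank of a tensor. -/
def cpRank {m n : ℕ} (T : Tensor m n) : ℕ := sInf {r | T ∈ cpSet m n r}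

/-- The symmetric rank of a tensor. -/
def symRank {m n : ℕ} (T : Tensor m n) : ℕ := sInf {r | T ∈ symSet m n r}

/-- The Vandermonde rank of a tensor. -/
def vandRank {m n : ℕ} (T : Tensor m n) : ℕ := sInf {r | T ∈ vandSet m n r}

/-- The border rank of a tensor (closure in the product topology). -/
def brank {m n : ℕ} (T : Tensor m n) : ℕ := sInf {r | T ∈ closure (cpSet m n r)}

/-- The symmetric border rank of a tensor. -/
def bSymRank {m n : ℕ} (T : Tensor m n) : ℕ := sInf {r | T ∈ closure (symSet m n r)}

/-- The border Vandermonde rank of a tensor. -/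
def bVandRank {m n : ℕ} (T : Tensor m n) : ℕ := sInf {r | T ∈ closure (vandSet m n r)}

/-- `T` is the Hankel tensor with parameter vector `h ∈ ℂ^{(n-1)m+1}`. -/
def IsHankel {m n : ℕ} (T : Tensor m n) (h : Fin ((n - 1) * m + 1) → ℂ) : Prop :=
  ∀ i : Fin m → Fin n, T i = h ⟨∑ j, (i j : ℕ), by
    have h1 : ∑ j, (i j : ℕ) ≤ ∑ _j : Fin m, (n - 1) :=
      Finset.sum_le_sum fun j _ => Nat.le_pred_of_lt (i j).isLt
    simp only [Finset.sum_const, Finset.card_univ, Fintype.card_fin, smul_eq_mul] at h1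
    exact Nat.lt_succ_of_le (h1.trans (le_of_eq (Nat.mul_comm m (n - 1))))⟩

/-- The `(d-r+1) × (r+1)` Hankel (catalecticant) matrix `C_{d-r,r}(h)` of `h ∈ ℂ^{d+1}`. -/
def hMat (d r : ℕ) (h : Fin (d + 1) → ℂ) : Matrix (Fin (d - r + 1)) (Fin (r + 1)) ℂ :=
  Matrix.of fun i j => if hij : (i : ℕ) + (j : ℕ) < d + 1 then h ⟨(i : ℕ) + (j : ℕ), hij⟩ else 0

/-- The binary form `f(x,y) = f_0 x^r + f_1 x^(r-1) y + ⋯ + f_r y^r`. -/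
def binForm (r : ℕ) (f : Fin (r + 1) → ℂ) : MvPolynomial (Fin 2) ℂ :=
  ∑ j : Fin (r + 1), C (f j) * X 0 ^ (r - (j : ℕ)) * X 1 ^ (j : ℕ)

/-- The binary form `h(x,y) = ∑_j binom(d,j) h_j x^j y^(d-j)` associated with `h ∈ ℂ^{d+1}`. -/
def assocForm (d : ℕ) (h : Fin (d + 1) → ℂ) : MvPolynomial (Fin 2) ℂ :=
  ∑ j : Fin (d + 1), C ((d.choose (j : ℕ) : ℂ) * h j) * X 0 ^ (j : ℕ) * X 1 ^ (d - (j : ℕ))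

/-- Parameter vectors of binary forms of Waring rank at most `r`. -/
def waringSet (d r : ℕ) : Set (Fin (d + 1) → ℂ) :=
  {h | ∃ ab : Fin r → ℂ × ℂ,
    assocForm d h = ∑ i, (C (ab i).1 * X 0 + C (ab i).2 * X 1) ^ d}

/-- The Waring rank of the binary form associated with `h`. -/
def waringRank (d : ℕ) (h : Fin (d + 1) → ℂ) : ℕ := sInf {r | h ∈ waringSet d r}

/-- The border Waring rank of the binary form associated with `h`. -/
def bWaringRank (d : ℕ) (h : Fin (d + 1) → ℂ) : ℕ := sInf {r | h ∈ closure (waringSet d r)}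

/-!
Writing `L` for the linear functional on polynomials with moments `h`, a binary form `f` of degree
`k` is apolar to `h` when `L (f q) = 0` for all `q` of degree `d - k`. A nonzero apolar form of
degree `k` forces `rank C_{d-s,s}(h) ≤ k`, so `r` is the least degree of a nonzero apolar form.

A decomposition of `h` into `k` powers of linear forms writes `L` as a weighted sum of evaluations
at `k` points of `ℙ¹`. If `k ≤ d - r + 1`, testing against forms vanishing at all points but one
shows that an apolar form of degree `r` vanishes at every point; hence there are at most `r` points,
and the product of the corresponding linear forms is a squarefree apolar form of degree at most `r`.
Conversely, the apolar forms of degree `d - r + 2` have no common zero, since a common zero would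
produce an apolar form of degree `r - 1`; so a generic one is squarefree, and its zeros are the
points of a decomposition of `h`.

The border ranks are at least `r` because they bound the ranks of flattenings, and at most `r`
because an apolar form of degree `r` is a limit of squarefree forms, with `h` following along.
-/

/-! ### Apolar forms -/

section Apolarity

open scoped Polynomial

variable {R : Type*} [CommRing R] {d k l : ℕ}

/-- The linear functional on polynomials whose moments are `h 0, …, h d`, the moments of degree
greater than `d` being zero. -/
def momentFunctional (h : Fin (d + 1) → R) : R[X] →ₗ[R] R :=
  ∑ i, h i • Polynomial.lcoeff R i

lemma momentFunctional_apply (h : Fin (d + 1) → R) (p : R[X]) :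
    momentFunctional h p = ∑ i, h i * p.coeff i := by
  simp [momentFunctional]

lemma momentFunctional_X_pow (h : Fin (d + 1) → R) (i : Fin (d + 1)) :
    momentFunctional h (Polynomial.X ^ (i : ℕ)) = h i := by
  simp [momentFunctional_apply, Polynomial.coeff_X_pow, Fin.val_inj]

lemma momentFunctional_eq_of_forall_X_pow {h : Fin (d + 1) → R} {φ : R[X] →ₗ[R] R}
    (hφ : ∀ i : Fin (d + 1), φ (Polynomial.X ^ (i : ℕ)) = h i) {p : R[X]} (hp : p.natDegree ≤ d) :
    momentFunctional h p = φ p := by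
  conv_rhs => rw [p.as_sum_range' (d + 1) (by omega), Finset.sum_range, map_sum]
  rw [momentFunctional_apply]
  refine Finset.sum_congr rfl fun i _ => ?_
  rw [← Polynomial.C_mul_X_pow_eq_monomial, ← Polynomial.smul_eq_C_mul, map_smul, hφ, smul_eq_mul,
    mul_comm]

/-- The space `(h^⊥)_k` of forms of degree `k` apolar to `h`. A binary form of degree `k` is encoded
by its dehomogenization, a polynomial of degree at most `k`. -/
def apolarForms (h : Fin (d + 1) → R) (k : ℕ) : Submodule R R[X] where
  carrier := {p | p.natDegree ≤ k ∧ ∀ q, q.natDegree ≤ d - k → momentFunctional h (p * q) = 0}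
  zero_mem' := by simp
  add_mem' {p q} hp hq := ⟨Polynomial.natDegree_add_le_of_degree_le hp.1 hq.1, fun u hu => by
    rw [add_mul, map_add, hp.2 u hu, hq.2 u hu, add_zero]⟩
  smul_mem' c p hp := ⟨(Polynomial.natDegree_smul_le c p).trans hp.1, fun u hu => by
    rw [smul_mul_assoc, map_smul, hp.2 u hu, smul_zero]⟩

variable {h : Fin (d + 1) → R}

lemma mem_apolarForms_iff_X_pow {p : R[X]} : p ∈ apolarForms h k ↔
    p.natDegree ≤ k ∧ ∀ i ≤ d - k, momentFunctional h (p * Polynomial.X ^ i) = 0 := by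
  refine and_congr_right fun _ =>
    ⟨fun H i hi => H _ ((Polynomial.natDegree_X_pow_le i).trans hi), fun H q hq => ?_⟩
  rw [q.as_sum_range' (d - k + 1) (by omega), Finset.mul_sum, map_sum]
  refine Finset.sum_eq_zero fun i hi => ?_
  rw [← Polynomial.C_mul_X_pow_eq_monomial, mul_left_comm, ← Polynomial.smul_eq_C_mul, map_smul,
    H i (Nat.lt_succ_iff.1 (Finset.mem_range.1 hi)), smul_zero]

/-- The matrix whose rows are the coefficient vectors of `p, X p, …, X ^ (d - k) p`. If `p` has
degree at most `k`, this is the matrix of multiplication by `p` from polynomials of degree at most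
`d - k` to polynomials of degree at most `d`, acting on row vectors. -/
def shiftMatrix (d k : ℕ) (p : R[X]) : Matrix (Fin (d - k + 1)) (Fin (d + 1)) R :=
  Matrix.of fun i => Polynomial.toFn (d + 1) (p * Polynomial.X ^ (i : ℕ))

lemma shiftMatrix_mulVec (p : R[X]) (i : Fin (d - k + 1)) :
    (shiftMatrix d k p).mulVec h i = momentFunctional h (p * Polynomial.X ^ (i : ℕ)) := by
  rw [momentFunctional_apply, Matrix.mulVec, dotProduct_comm]
  rfl

lemma shiftMatrix_mulVec_eq_zero_iff {p : R[X]} (hp : p.natDegree ≤ k) :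
    (shiftMatrix d k p).mulVec h = 0 ↔ p ∈ apolarForms h k := by
  simp only [mem_apolarForms_iff_X_pow, funext_iff, hp, true_and, shiftMatrix_mulVec, Pi.zero_apply]
  exact ⟨fun H i hi => H ⟨i, by omega⟩, fun H i => H i (by omega)⟩

lemma shiftMatrix_add_C_mul (d k : ℕ) (p q : R[X]) (c : R) :
    shiftMatrix d k (p + Polynomial.C c * q) = shiftMatrix d k p + c • shiftMatrix d k q := by
  ext i j
  simp [shiftMatrix, Polynomial.toFn, add_mul, mul_assoc]

lemma vecMul_shiftMatrix [DecidableEq R] (p : R[X]) (c : Fin (d - k + 1) → R) :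
    (shiftMatrix d k p).vecMul c =
      Polynomial.toFn (d + 1) (p * Polynomial.ofFn (d - k + 1) c) := by
  ext j
  rw [Polynomial.ofFn_eq_sum_monomial, Finset.mul_sum, map_sum, Finset.sum_apply, Matrix.vecMul,
    dotProduct]
  refine Finset.sum_congr rfl fun i _ => ?_
  rw [← Polynomial.C_mul_X_pow_eq_monomial, mul_left_comm, ← Polynomial.smul_eq_C_mul, map_smul]
  rfl

end Apolarity

section Rank

open scoped Polynomial

variable {K : Type*} [Field K] {d k : ℕ} {p : K[X]}

lemma vecMul_shiftMatrix_injective (hk : k ≤ d) (hp0 : p ≠ 0) (hp : p.natDegree ≤ k) :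
    Function.Injective (shiftMatrix d k p).vecMul := by
  classical
  refine (injective_iff_map_eq_zero (shiftMatrix d k p).vecMulLinear).2 fun c hc => ?_
  have hdeg : (p * Polynomial.ofFn (d - k + 1) c).natDegree < d + 1 := by
    have := Polynomial.ofFn_natDegree_lt (Nat.le_add_left 1 (d - k)) c
    exact Nat.lt_succ_of_le
      ((Polynomial.natDegree_mul_le_of_le hp (Nat.le_of_lt_succ this)).trans (by omega))
  have hzero : p * Polynomial.ofFn (d - k + 1) c = 0 := by
    rw [Matrix.vecMulLinear_apply, vecMul_shiftMatrix] at hc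
    rw [← Polynomial.ofFn_comp_toFn_eq_id_of_natDegree_lt hdeg, hc, map_zero]
  exact Polynomial.injective_ofFn _
    (((mul_eq_zero.1 hzero).resolve_left hp0).trans (map_zero _).symm)

lemma rank_shiftMatrix (hk : k ≤ d) (hp0 : p ≠ 0) (hp : p.natDegree ≤ k) :
    (shiftMatrix d k p).rank = d - k + 1 := by
  simpa using (Matrix.vecMul_injective_iff.1 (vecMul_shiftMatrix_injective hk hp0 hp)).rank_matrix

lemma exists_shiftMatrix_mul_eq_one (hk : k ≤ d) (hp0 : p ≠ 0) (hp : p.natDegree ≤ k) :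
    ∃ B : Matrix (Fin (d + 1)) (Fin (d - k + 1)) K, shiftMatrix d k p * B = 1 := by
  have hrange : LinearMap.range (shiftMatrix d k p).mulVecLin = ⊤ :=
    Submodule.eq_top_of_finrank_eq
      ((rank_shiftMatrix hk hp0 hp).trans (Module.finrank_fin_fun K).symm)
  exact Matrix.mulVec_surjective_iff_exists_right_inverse.1 (LinearMap.range_eq_top.1 hrange)

end Rank

section Catalecticant

variable {d k s : ℕ} {h : Fin (d + 1) → ℂ}

lemma hMat_apply (i : Fin (d - k + 1)) (j : Fin (k + 1)) :
    hMat d k h i j = momentFunctional h (Polynomial.X ^ (i + j : ℕ)) := by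
  rw [hMat, Matrix.of_apply]
  split_ifs with hij
  · exact (momentFunctional_X_pow h ⟨i + j, hij⟩).symm
  · rw [momentFunctional_apply]
    refine (Finset.sum_eq_zero fun l _ => ?_).symm
    rw [Polynomial.coeff_X_pow, if_neg (by omega), mul_zero]

lemma hMat_mulVec [DecidableEq ℂ] (f : Fin (k + 1) → ℂ) (i : Fin (d - k + 1)) :
    (hMat d k h).mulVec f i =
      momentFunctional h (Polynomial.ofFn (k + 1) f * Polynomial.X ^ (i : ℕ)) := by
  simp only [Polynomial.ofFn_eq_sum_monomial, Finset.sum_mul, Polynomial.monomial_mul_X_pow,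
    map_sum, Matrix.mulVec, dotProduct]
  refine Finset.sum_congr rfl fun j _ => ?_
  rw [← Polynomial.C_mul_X_pow_eq_monomial, ← Polynomial.smul_eq_C_mul, map_smul, smul_eq_mul,
    hMat_apply, mul_comm, add_comm]

lemma hMat_mulVec_eq_zero_iff [DecidableEq ℂ] (f : Fin (k + 1) → ℂ) :
    (hMat d k h).mulVec f = 0 ↔ Polynomial.ofFn (k + 1) f ∈ apolarForms h k := by
  have hdeg := Nat.le_of_lt_succ (Polynomial.ofFn_natDegree_lt (Nat.le_add_left 1 k) f)
  simp only [mem_apolarForms_iff_X_pow, funext_iff, hdeg, true_and, hMat_mulVec, Pi.zero_apply]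
  exact ⟨fun H i hi => H ⟨i, by omega⟩, fun H i => H i (by omega)⟩

/-- A nonzero form of degree `k` apolar to `h` has `s - k + 1` independent multiples in the kernel
of the catalecticant. -/
lemma rank_hMat_le_of_mem_apolarForms (hsd : s ≤ d) {p : Polynomial ℂ} (hp0 : p ≠ 0)
    (hp : p ∈ apolarForms h k) : (hMat d s h).rank ≤ k := by
  classical
  rcases lt_or_ge s k with hsk | hks
  · simpa using (hMat d s h).rank_le_width.trans hsk
  have hmul : hMat d s h * (shiftMatrix s k p).transpose = 0 := by
    ext i j
    have hdeg : (p * Polynomial.X ^ (j : ℕ)).natDegree < s + 1 :=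
      (Polynomial.natDegree_mul_le_of_le hp.1 (Polynomial.natDegree_X_pow_le _)).trans_lt (by omega)
    have := hMat_mulVec (h := h) (Polynomial.toFn (s + 1) (p * Polynomial.X ^ (j : ℕ))) i
    rw [Polynomial.ofFn_comp_toFn_eq_id_of_natDegree_lt hdeg, mul_assoc, ← pow_add,
      hp.2 _ (by rw [Polynomial.natDegree_X_pow]; omega)] at this
    exact this
  have hrank := Matrix.rank_add_rank_le_card_of_mul_eq_zero hmul
  rw [Matrix.rank_transpose, rank_shiftMatrix hks hp0 hp.1, Fintype.card_fin] at hrank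
  omega

lemma apolarForms_eq_bot_of_lt_rank (hsd : s ≤ d) (hk : k < (hMat d s h).rank) :
    apolarForms h k = ⊥ :=
  (Submodule.eq_bot_iff _).2 fun _ hp =>
    by_contra fun hp0 => hk.not_ge (rank_hMat_le_of_mem_apolarForms hsd hp0 hp)

end Catalecticant

/-! ### Sums of powers of linear forms -/

section PowerSums

open scoped Polynomial

variable {K : Type*} [Field K] {d k : ℕ}

/-- The sums of `k` vectors `(a ^ d, a ^ (d - 1) * b, …, b ^ d)`: the parameter vectors of Hankel
tensors of Vandermonde rank at most `k`. -/
def powerSumSet (d k : ℕ) : Set (Fin (d + 1) → K) :=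
  {h | ∃ ab : Fin k → K × K, ∀ i, h i = ∑ l, (ab l).1 ^ (d - (i : ℕ)) * (ab l).2 ^ (i : ℕ)}

/-- An apolar polynomial with simple roots turns the moment functional into a quadrature at its
roots, because division by it leaves only the interpolation polynomial. -/
lemma momentFunctional_eq_sum_eval [DecidableEq K] {h : Fin (d + 1) → K} {S : Finset K}
    (hS : Lagrange.nodal S id ∈ apolarForms h S.card) {p : K[X]} (hp : p.natDegree ≤ d) :
    momentFunctional h p = ∑ z ∈ S, momentFunctional h (Lagrange.basis S id z) * p.eval z := by
  have hmonic : (Lagrange.nodal S (id : K → K)).Monic := Lagrange.nodal_monic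
  have hdivision := Polynomial.modByMonic_add_div p (Lagrange.nodal S (id : K → K))
  have hrem : p %ₘ Lagrange.nodal S id = Lagrange.interpolate S id fun z => p.eval z := by
    refine Lagrange.eq_interpolate_of_eval_eq _ (Set.injOn_id _) ?_ fun z hz => ?_
    · rw [← Lagrange.degree_nodal (v := (id : K → K))]
      exact Polynomial.degree_modByMonic_lt _ hmonic
    · have := congrArg (Polynomial.eval (id z)) hdivision
      rwa [Polynomial.eval_add, Polynomial.eval_mul, Lagrange.eval_nodal_at_node hz, zero_mul,
        add_zero] at this
  have hquot : (p /ₘ Lagrange.nodal S id).natDegree ≤ d - S.card := by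
    rw [Polynomial.natDegree_divByMonic _ hmonic, Lagrange.natDegree_nodal]
    omega
  conv_lhs => rw [← hdivision, map_add, hS.2 _ hquot, add_zero, hrem, Lagrange.interpolate_apply]
  rw [map_sum]
  refine Finset.sum_congr rfl fun z _ => ?_
  rw [← Polynomial.smul_eq_C_mul, map_smul, smul_eq_mul, mul_comm]

lemma mem_powerSumSet_of_nodal_mem_apolarForms [IsAlgClosed K] (hd : d ≠ 0) {h : Fin (d + 1) → K}
    {S : Finset K} (hS : Lagrange.nodal S id ∈ apolarForms h S.card) :
    h ∈ powerSumSet d S.card := by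
  classical
  choose root hroot using fun c : K => IsAlgClosed.exists_pow_nat_eq c (Nat.pos_of_ne_zero hd)
  let weight (z : K) := root (momentFunctional h (Lagrange.basis S id z))
  let node := S.equivFin.symm
  refine ⟨fun l => (weight (node l), weight (node l) * node l), fun i => ?_⟩
  rw [← momentFunctional_X_pow h, momentFunctional_eq_sum_eval hS (by simp; omega),
    ← Finset.sum_coe_sort, ← node.sum_comp]
  refine Finset.sum_congr rfl fun l _ => ?_
  rw [mul_pow, ← mul_assoc, ← pow_add, Nat.sub_add_cancel (by omega), hroot, Polynomial.eval_pow,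
    Polynomial.eval_X]

lemma nodal_roots_toFinset [DecidableEq K] {g : K[X]} (hg : g.Splits) (hnodup : g.roots.Nodup) :
    Polynomial.C g.leadingCoeff * Lagrange.nodal g.roots.toFinset id = g := by
  conv_rhs => rw [hg.eq_prod_roots]
  rw [Lagrange.nodal_eq, Finset.prod, Multiset.toFinset_val, hnodup.dedup]
  rfl

lemma mem_powerSumSet_of_squarefree [IsAlgClosed K] (hd : d ≠ 0) {h : Fin (d + 1) → K} {g : K[X]}
    (hsq : Squarefree g) (hg : g ∈ apolarForms h k) (hk : g.natDegree = k) :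
    h ∈ powerSumSet d k := by
  classical
  have hsplits := IsAlgClosed.splits g
  have hnodup := Polynomial.nodup_roots (PerfectField.separable_iff_squarefree.2 hsq)
  have hcard : g.roots.toFinset.card = k := by
    rw [Multiset.toFinset_card_of_nodup hnodup, ← hsplits.natDegree_eq_card_roots, hk]
  have hlead : g.leadingCoeff ≠ 0 := Polynomial.leadingCoeff_ne_zero.2 hsq.ne_zero
  rw [← nodal_roots_toFinset hsplits hnodup, ← Polynomial.smul_eq_C_mul,
    Submodule.smul_mem_iff _ hlead] at hg
  rw [← hcard] at hg ⊢
  exact mem_powerSumSet_of_nodal_mem_apolarForms hd hg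

end PowerSums

/-! ### Points of the projective line -/

section Points

open scoped Polynomial

variable {K : Type*} [Field K] {k l n : ℕ}

/-- The value at a point of `ℙ¹ = K ∪ {∞}` of a binary form of degree `k`, given by its
dehomogenization. Points are encoded by `Option K`, `none` being the point at infinity. -/
def pointEval (k : ℕ) : Option K → K[X] →ₗ[K] K
  | some z => Polynomial.leval z
  | none => Polynomial.lcoeff K k

lemma pointEval_some (k : ℕ) (z : K) (p : K[X]) : pointEval k (some z) p = p.eval z := rfl

lemma pointEval_none (k : ℕ) (p : K[X]) : pointEval k none p = p.coeff k := rfl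

lemma pointEval_mul (P : Option K) {p q : K[X]} (hp : p.natDegree ≤ k) (hq : q.natDegree ≤ l)
    (hkl : k + l = n) : pointEval n P (p * q) = pointEval k P p * pointEval l P q := by
  subst hkl
  cases P with
  | none => exact Polynomial.coeff_mul_add_eq_of_natDegree_le hp hq
  | some z => exact Polynomial.eval_mul

lemma exists_pointEval_eq_one (k : ℕ) (P : Option K) :
    ∃ p : K[X], p.natDegree ≤ k ∧ pointEval k P p = 1 := by
  cases P with
  | none => exact ⟨Polynomial.X ^ k, by simp, by simp [pointEval_none]⟩
  | some z => exact ⟨1, by simp, by simp [pointEval_some]⟩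

/-- The dehomogenization of the linear form vanishing at a point of the projective line. -/
def pointForm : Option K → K[X]
  | some z => Polynomial.X - Polynomial.C z
  | none => 1

lemma natDegree_pointForm_le (P : Option K) : (pointForm P).natDegree ≤ 1 := by
  cases P <;> simp [pointForm]

lemma pointForm_ne_zero (P : Option K) : pointForm P ≠ 0 := by
  cases P
  · exact one_ne_zero
  · exact Polynomial.X_sub_C_ne_zero _

lemma pointEval_pointForm_eq_zero_iff {P Q : Option K} :
    pointEval 1 P (pointForm Q) = 0 ↔ P = Q := by
  cases P <;> cases Q <;>
    simp [pointForm, pointEval_some, pointEval_none, sub_eq_zero, Polynomial.coeff_one]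

lemma natDegree_prod_pointForm_le (S : Finset (Option K)) :
    (∏ P ∈ S, pointForm P).natDegree ≤ S.card := by
  simpa using (Polynomial.natDegree_prod_le S pointForm).trans
    (Finset.sum_le_card_nsmul S _ 1 fun P _ => natDegree_pointForm_le P)

lemma prod_pointForm_ne_zero (S : Finset (Option K)) : ∏ P ∈ S, pointForm P ≠ 0 :=
  Finset.prod_ne_zero_iff.2 fun P _ => pointForm_ne_zero P

lemma pointEval_prod_pointForm_eq_zero_iff {S : Finset (Option K)} {P : Option K} :
    pointEval S.card P (∏ Q ∈ S, pointForm Q) = 0 ↔ P ∈ S := by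
  classical
  induction S using Finset.induction_on with
  | empty => cases P <;> simp [pointEval_some, pointEval_none]
  | insert Q S hQ ih =>
    rw [Finset.prod_insert hQ, Finset.card_insert_of_notMem hQ, pointEval_mul P
      (natDegree_pointForm_le Q) (natDegree_prod_pointForm_le S) (add_comm _ _), mul_eq_zero, ih,
      pointEval_pointForm_eq_zero_iff, Finset.mem_insert]

lemma card_le_of_pointEval_eq_zero {f : K[X]} (hf0 : f ≠ 0) (hf : f.natDegree ≤ k)
    {S : Finset (Option K)} (hS : ∀ P ∈ S, pointEval k P f = 0) : S.card ≤ k := by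
  classical
  have hroots : S.eraseNone.card ≤ f.natDegree := by
    refine Polynomial.card_le_degree_of_subset_roots fun z hz => ?_
    rw [Polynomial.mem_roots hf0]
    exact hS (some z) (by simpa using hz)
  by_cases hnone : none ∈ S
  · have hlt : f.natDegree ≠ k := by
      rintro rfl
      exact hf0 (Polynomial.leadingCoeff_eq_zero.1 (hS none hnone))
    have := Finset.card_eraseNone_of_mem hnone
    omega
  · rw [Finset.card_eraseNone_of_not_mem hnone] at hroots
    omega

end Points

/-! ### Squarefree apolar forms -/

section SquarefreeApolar

open scoped Polynomial

variable {K : Type*} [Field K] {d t : ℕ} {h : Fin (d + 1) → K}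

/-- A multiple root of `F + ε G` is a root of the Wronskian of `F` and `G`, and it determines `ε`
since `G` cannot vanish there. -/
lemma finite_setOf_not_squarefree_add_C_mul [IsAlgClosed K] [CharZero K] {F G : K[X]}
    (hFG : IsCoprime F G) (hG : G.natDegree ≠ 0) :
    {ε : K | ¬ Squarefree (F + Polynomial.C ε * G)}.Finite := by
  have hW : Polynomial.wronskian F G ≠ 0 := fun hW =>
    hG (Polynomial.derivative_eq_zero.1 (hFG.wronskian_eq_zero_iff.1 hW).2)
  refine ((Polynomial.wronskian F G).rootSet_finite K |>.image
    fun z => -F.eval z / G.eval z).subset fun ε hε => ?_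
  rw [Set.mem_ofPred_eq, ← PerfectField.separable_iff_squarefree, Polynomial.Separable,
    Polynomial.isCoprime_iff_aeval_ne_zero_of_isAlgClosed (k := K) (K := K)] at hε
  push Not at hε
  obtain ⟨z, hz, hz'⟩ := hε
  simp only [Polynomial.coe_aeval_eq_eval, Polynomial.eval_add, Polynomial.eval_mul,
    Polynomial.eval_C, Polynomial.derivative_add, Polynomial.derivative_C_mul] at hz hz'
  have hGz : G.eval z ≠ 0 := by
    intro hGz
    have hFz : F.eval z = 0 := by simpa [hGz] using hz
    obtain ⟨a, b, hab⟩ := hFG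
    simpa [hFz, hGz] using congrArg (Polynomial.eval z) hab
  refine ⟨z, (Polynomial.mem_rootSet_of_ne hW).2 ?_, ?_⟩
  · rw [Polynomial.coe_aeval_eq_eval, Polynomial.wronskian, Polynomial.eval_sub,
      Polynomial.eval_mul, Polynomial.eval_mul]
    linear_combination (Polynomial.derivative G).eval z * hz - G.eval z * hz'
  · field_simp
    linear_combination -hz

lemma finite_setOf_not_squarefree_and_natDegree_eq [IsAlgClosed K] [CharZero K] {F G : K[X]}
    (hFG : IsCoprime F G) (hF : F.natDegree ≤ t) (hG : G.natDegree = t) (ht : t ≠ 0) :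
    {ε : K | ¬ (Squarefree (F + Polynomial.C ε * G) ∧
      (F + Polynomial.C ε * G).natDegree = t)}.Finite := by
  have hGt : G.coeff t ≠ 0 := by
    rw [← hG]
    exact Polynomial.leadingCoeff_ne_zero.2 (Polynomial.ne_zero_of_natDegree_gt (n := 0) (by omega))
  refine ((finite_setOf_not_squarefree_add_C_mul hFG (by omega)).union
    (Set.finite_singleton (-F.coeff t / G.coeff t))).subset fun ε hε => ?_
  refine (not_and_or.1 hε).imp_right fun hdeg => ?_
  have hle : (F + Polynomial.C ε * G).natDegree ≤ t :=
    Polynomial.natDegree_add_le_of_degree_le hF ((Polynomial.natDegree_C_mul_le _ _).trans hG.le)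
  have hcoeff : F.coeff t + ε * G.coeff t = 0 := by
    rw [← Polynomial.coeff_C_mul, ← Polynomial.coeff_add]
    exact Polynomial.coeff_eq_zero_of_natDegree_lt (hle.lt_of_ne hdeg)
  rw [Set.mem_singleton_iff]
  field_simp
  linear_combination hcoeff

lemma exists_momentFunctional_mul_eq {φ : K[X] →ₗ[K] K} (hφ : ∀ g ∈ apolarForms h t, φ g = 0) :
    ∃ b : K[X], b.natDegree ≤ d - t ∧ ∀ g, g.natDegree ≤ t → momentFunctional h (g * b) = φ g := by
  let moment (j : Fin (d - t + 1)) : Polynomial.degreeLT K (t + 1) →ₗ[K] K :=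
    momentFunctional h ∘ₗ LinearMap.mulRight K (Polynomial.X ^ (j : ℕ)) ∘ₗ Submodule.subtype _
  have hmem {g : K[X]} : g ∈ Polynomial.degreeLT K (t + 1) ↔ g.natDegree ≤ t := by
    rw [Polynomial.degreeLT_succ_eq_degreeLE, Polynomial.mem_degreeLE,
      Polynomial.natDegree_le_iff_degree_le]
  have hspan : φ ∘ₗ Submodule.subtype _ ∈ Submodule.span K (Set.range moment) := by
    refine mem_span_of_iInf_ker_le_ker fun g hg => hφ g (mem_apolarForms_iff_X_pow.2 ?_)
    exact ⟨hmem.1 g.2, fun i hi => (Submodule.mem_iInf _).1 hg ⟨i, by omega⟩⟩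
  obtain ⟨c, hc⟩ := (Submodule.mem_span_range_iff_exists_fun K).1 hspan
  refine ⟨∑ j, c j • Polynomial.X ^ (j : ℕ), ?_, fun g hg => ?_⟩
  · exact Polynomial.natDegree_sum_le_of_forall_le _ _ fun j _ =>
      (Polynomial.natDegree_smul_le _ _).trans ((Polynomial.natDegree_X_pow_le _).trans (by omega))
  · have hcg := LinearMap.congr_fun hc ⟨g, hmem.2 hg⟩
    rw [LinearMap.comp_apply, Submodule.subtype_apply] at hcg
    rw [← hcg, Finset.mul_sum, map_sum, LinearMap.sum_apply]
    refine Finset.sum_congr rfl fun j _ => ?_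
    rw [mul_smul_comm, map_smul]
    rfl

/-- If `P` were a base point, evaluation at `P` would be `g ↦ L (g * b)` for some `b`, and
`pointForm P * b` would be a nonzero apolar form of degree `d - t + 1`. -/
lemma exists_mem_apolarForms_pointEval_ne_zero (ht : 1 ≤ t) (htd : t ≤ d)
    (hbot : apolarForms h (d - t + 1) = ⊥) (P : Option K) :
    ∃ g ∈ apolarForms h t, pointEval t P g ≠ 0 := by
  by_contra! hbase
  obtain ⟨b, hb, hbrep⟩ := exists_momentFunctional_mul_eq hbase
  have hb0 : b ≠ 0 := by
    rintro rfl
    obtain ⟨p, hp, hp1⟩ := exists_pointEval_eq_one t P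
    simpa [hp1] using hbrep p hp
  have hmem : pointForm P * b ∈ apolarForms h (d - t + 1) := by
    refine ⟨(Polynomial.natDegree_mul_le_of_le (natDegree_pointForm_le P) hb).trans (by omega),
      fun q hq => ?_⟩
    have hq' : q.natDegree ≤ t - 1 := by omega
    have hdeg := Polynomial.natDegree_mul_le_of_le (natDegree_pointForm_le P) hq'
    rw [mul_right_comm, hbrep _ (by omega),
      pointEval_mul P (natDegree_pointForm_le P) hq' (by omega),
      pointEval_pointForm_eq_zero_iff.2 rfl, zero_mul]
  rw [hbot, Submodule.mem_bot] at hmem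
  exact mul_ne_zero (pointForm_ne_zero P) hb0 hmem

lemma exists_isCoprime_mem_apolarForms [IsAlgClosed K] (ht : 1 ≤ t) (htd : t ≤ d)
    (hbot : apolarForms h (d - t + 1) = ⊥) :
    ∃ F ∈ apolarForms h t, ∃ G ∈ apolarForms h t, G.natDegree = t ∧ IsCoprime F G := by
  classical
  have hbpf := exists_mem_apolarForms_pointEval_ne_zero ht htd hbot
  obtain ⟨G, hG, hGt⟩ := hbpf none
  have hG0 : G ≠ 0 := by
    rintro rfl
    exact hGt (map_zero _)
  obtain ⟨F, hF, hFG⟩ := Module.Dual.exists_forall_mem_ne_zero_of_forall_exists (apolarForms h t)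
    (fun z : G.roots.toFinset => pointEval t (some z.1)) fun z => hbpf (some z.1)
  refine ⟨F, hF, G, hG, hG.1.antisymm (Polynomial.le_natDegree_of_ne_zero hGt), ?_⟩
  rw [Polynomial.isCoprime_iff_aeval_ne_zero_of_isAlgClosed (k := K) (K := K)]
  intro z
  by_cases hz : G.eval z = 0
  · exact Or.inl (hFG ⟨z, by simpa [hG0] using hz⟩)
  · exact Or.inr hz

lemma exists_squarefree_mem_apolarForms [IsAlgClosed K] [CharZero K] (ht : 1 ≤ t) (htd : t ≤ d)
    (hbot : apolarForms h (d - t + 1) = ⊥) :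
    ∃ g ∈ apolarForms h t, Squarefree g ∧ g.natDegree = t := by
  obtain ⟨F, hF, G, hG, hGt, hFG⟩ := exists_isCoprime_mem_apolarForms ht htd hbot
  obtain ⟨ε, hε⟩ := (finite_setOf_not_squarefree_and_natDegree_eq hFG hF.1 hGt
    (Nat.one_le_iff_ne_zero.1 ht)).infinite_compl.nonempty
  refine ⟨F + Polynomial.C ε * G, ?_, not_not.1 hε⟩
  rw [← Polynomial.smul_eq_C_mul]
  exact add_mem hF (Submodule.smul_mem _ ε hG)

end SquarefreeApolar

/-! ### Limits of sums of powers -/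

section Closure

open scoped Polynomial Topology

open Filter

lemma exists_tendsto_mulVec_eq_zero {m n 𝕜 : Type*} [Finite m] [DecidableEq m] [Fintype n]
    [Field 𝕜] [TopologicalSpace 𝕜] [IsTopologicalDivisionRing 𝕜] [T1Space 𝕜]
    {A : Matrix m n 𝕜} {B : Matrix n m 𝕜} (hB : A * B = 1) (A' : Matrix m n 𝕜) {h : n → 𝕜}
    (hh : A.mulVec h = 0) :
    ∃ u : 𝕜 → n → 𝕜, Tendsto u (𝓝 0) (𝓝 h) ∧ ∀ᶠ ε in 𝓝 0, (A + ε • A').mulVec (u ε) = 0 := by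
  have := Fintype.ofFinite m
  let N (ε : 𝕜) : Matrix m m 𝕜 := (A + ε • A') * B
  have hN : Continuous N := by fun_prop
  have hN0 : N 0 = 1 := by simp [N, hB]
  refine ⟨fun ε => h - B.mulVec ((N ε)⁻¹.mulVec ((A + ε • A').mulVec h)), ?_, ?_⟩
  · have hNinv : Tendsto (fun ε => (N ε)⁻¹) (𝓝 0) (𝓝 (N 0)⁻¹) := by
      refine Tendsto.comp (continuousAt_matrix_inv _ ?_) (hN.tendsto 0)
      simp only [hN0, Matrix.det_one, Ring.inverse_eq_inv']
      exact continuousAt_inv₀ one_ne_zero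
    have hcont : Continuous fun x : Matrix m m 𝕜 × 𝕜 =>
        h - B.mulVec (x.1.mulVec ((A + x.2 • A').mulVec h)) := by
      fun_prop
    simpa [Function.comp_def, hh] using
      (hcont.tendsto ((N 0)⁻¹, 0)).comp (hNinv.prodMk_nhds tendsto_id)
  · have hdet : ∀ᶠ ε in 𝓝 (0 : 𝕜), (N ε).det ≠ 0 :=
      hN.matrix_det.continuousAt.eventually_ne (by simp [hN0])
    filter_upwards [hdet] with ε hε
    rw [Matrix.mulVec_sub, Matrix.mulVec_mulVec, Matrix.mulVec_mulVec,
      Matrix.mul_nonsing_inv _ (isUnit_iff_ne_zero.2 hε), Matrix.one_mulVec, sub_self]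

lemma exists_isCoprime_natDegree_eq {K : Type*} [Field K] [Infinite K] {f : K[X]} (hf : f ≠ 0)
    (k : ℕ) : ∃ G : K[X], IsCoprime f G ∧ G.natDegree = k := by
  obtain ⟨c, hc⟩ := Polynomial.exists_eval_ne_zero_of_natDegree_lt_card f hf
    (Cardinal.natCast_lt_aleph0.trans_le (Cardinal.aleph0_le_mk K))
  refine ⟨(Polynomial.X - Polynomial.C c) ^ k, IsCoprime.pow_right ?_, by simp⟩
  exact ((Polynomial.irreducible_X_sub_C c).coprime_iff_not_dvd.2
    fun hdvd => hc (Polynomial.dvd_iff_isRoot.1 hdvd)).symm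

variable {𝕜 : Type*} [NontriviallyNormedField 𝕜] [IsAlgClosed 𝕜] [CharZero 𝕜] {d k : ℕ}
  {h : Fin (d + 1) → 𝕜}

/-- Perturb the apolar form `f` to squarefree forms `f + ε G`, and `h` along with it. -/
lemma mem_closure_powerSumSet (hk0 : k ≠ 0) (hk : k ≤ d) {f : 𝕜[X]} (hf0 : f ≠ 0)
    (hf : f ∈ apolarForms h k) : h ∈ closure (powerSumSet d k) := by
  obtain ⟨G, hfG, hG⟩ := exists_isCoprime_natDegree_eq hf0 k
  obtain ⟨B, hB⟩ := exists_shiftMatrix_mul_eq_one hk hf0 hf.1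
  obtain ⟨u, hu, huker⟩ := exists_tendsto_mulVec_eq_zero hB (shiftMatrix d k G)
    ((shiftMatrix_mulVec_eq_zero_iff hf.1).2 hf)
  have hgeneric : ∀ᶠ ε in 𝓝[≠] (0 : 𝕜), Squarefree (f + Polynomial.C ε * G) ∧
      (f + Polynomial.C ε * G).natDegree = k :=
    nhdsNE_le_cofinite 0 <| eventually_cofinite.2 <|
      finite_setOf_not_squarefree_and_natDegree_eq hfG hf.1 hG hk0
  refine mem_closure_of_tendsto (b := 𝓝[≠] 0) (hu.mono_left nhdsWithin_le_nhds) ?_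
  filter_upwards [huker.filter_mono nhdsWithin_le_nhds, hgeneric] with ε hε ⟨hsq, hdeg⟩
  refine mem_powerSumSet_of_squarefree (by omega) hsq ?_ hdeg
  rwa [← shiftMatrix_mulVec_eq_zero_iff hdeg.le, shiftMatrix_add_C_mul]

end Closure

/-! ### Squarefree binary forms -/

section SquarefreeForms

open scoped Polynomial

variable {K : Type*} [Field K] {k : ℕ} {p : K[X]}

lemma irreducible_homogenize_one (hp0 : p ≠ 0) (hp : p.natDegree ≤ 1) :
    Irreducible (p.homogenize 1) := by
  have hne : p.homogenize 1 ≠ 0 := mt (Polynomial.homogenize_eq_zero_iff hp).1 hp0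
  refine irreducible_of_totalDegree_eq_one
    ((Polynomial.isHomogeneous_homogenize p).totalDegree hne) fun c hc => isUnit_iff_ne_zero.2 ?_
  rintro rfl
  exact hne (MvPolynomial.ext _ _ fun m => by rw [coeff_zero, zero_dvd_iff.1 (hc m)])

lemma squarefree_homogenize_of_le_one (hk : k ≤ 1) (hp0 : p ≠ 0) (hp : p.natDegree ≤ k) :
    Squarefree (p.homogenize k) := by
  interval_cases k
  · obtain ⟨c, rfl⟩ := Polynomial.natDegree_eq_zero.1 (Nat.le_zero.1 hp)
    rw [Polynomial.homogenize_C, pow_zero, mul_one]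
    exact ((isUnit_iff_ne_zero.2 (Polynomial.C_ne_zero.1 hp0)).map C).squarefree
  · exact (irreducible_homogenize_one hp0 hp).squarefree

lemma homogenize_prod_pointForm (S : Finset (Option K)) :
    (∏ P ∈ S, pointForm P).homogenize S.card = ∏ P ∈ S, (pointForm P).homogenize 1 := by
  rw [← Polynomial.homogenize_finsetProd fun P _ => natDegree_pointForm_le P,
    Finset.sum_const, smul_eq_mul, mul_one]

/-- Linear forms vanishing at distinct points do not divide each other: evaluate at a zero. -/
lemma isRelPrime_homogenize_pointForm {P Q : Option K} (hPQ : P ≠ Q) :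
    IsRelPrime ((pointForm P).homogenize 1) ((pointForm Q).homogenize 1) := by
  have hirr := irreducible_homogenize_one (pointForm_ne_zero P) (natDegree_pointForm_le P)
  refine hirr.isRelPrime_iff_not_dvd.2 fun hdvd => hPQ ?_
  have heval := map_dvd (eval (P.elim ![1, 0] fun z => ![z, 1])) hdvd
  cases P <;> cases Q <;> simp_all [pointForm, sub_eq_zero]

lemma squarefree_homogenize_prod_pointForm (S : Finset (Option K)) :
    Squarefree ((∏ P ∈ S, pointForm P).homogenize S.card) := by
  rw [homogenize_prod_pointForm]
  exact Finset.squarefree_prod_of_pairwise_isCoprime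
    (fun _ _ _ _ hPQ => isRelPrime_homogenize_pointForm hPQ) fun P _ =>
      (irreducible_homogenize_one (pointForm_ne_zero P) (natDegree_pointForm_le P)).squarefree

lemma squarefree_map_mulEquiv {M N : Type*} [Monoid M] [Monoid N] (e : M ≃* N) {a : M} :
    Squarefree (e a) ↔ Squarefree a := by
  refine ⟨fun ha x hx => ?_, fun ha x hx => ?_⟩
  · simpa using ha (e x) (by simpa using map_dvd e hx)
  · simpa using ha (e.symm x) (by simpa using map_dvd e.symm hx)

end SquarefreeForms

/-- `binForm` pairs the highest power of the first variable with the constant coefficient, so that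
`Polynomial.homogenize` has its variables exchanged. -/
lemma binForm_eq_rename_homogenize [DecidableEq ℂ] (k : ℕ) (f : Fin (k + 1) → ℂ) :
    binForm k f =
      rename (Equiv.swap (0 : Fin 2) 1) ((Polynomial.ofFn (k + 1) f).homogenize k) := by
  rw [binForm, Polynomial.ofFn_eq_sum_monomial, Polynomial.homogenize_finsetSum, map_sum]
  refine Finset.sum_congr rfl fun j _ => ?_
  rw [← Polynomial.C_mul_X_pow_eq_monomial, Polynomial.homogenize_C_mul,
    Polynomial.homogenize_X_pow (Nat.le_of_lt_succ j.isLt), map_mul, map_mul, map_pow, map_pow,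
    rename_C, rename_X, rename_X, Equiv.swap_apply_left, Equiv.swap_apply_right, mul_assoc,
    mul_comm (X 0 ^ _)]

lemma squarefree_binForm_iff [DecidableEq ℂ] {k : ℕ} {f : Fin (k + 1) → ℂ} :
    Squarefree (binForm k f) ↔ Squarefree ((Polynomial.ofFn (k + 1) f).homogenize k) := by
  rw [binForm_eq_rename_homogenize]
  exact squarefree_map_mulEquiv (renameEquiv ℂ (Equiv.swap (0 : Fin 2) 1)).toMulEquiv

/-! ### Quadratures -/

section Quadrature

open scoped Polynomial

variable {K : Type*} [Field K] {d k l r : ℕ} {h : Fin (d + 1) → K} {S : Finset (Option K)}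
  {w : Option K → K} {f : K[X]}

/-- The moment functional of `h` is a weighted sum of evaluations of degree `d` forms at the points
of `S`: the coordinate-free shape of a decomposition of `h` into `d`-th powers of linear forms. -/
def IsQuadrature (h : Fin (d + 1) → K) (S : Finset (Option K)) (w : Option K → K) : Prop :=
  ∀ p : K[X], p.natDegree ≤ d → momentFunctional h p = ∑ P ∈ S, w P * pointEval d P p

lemma isQuadrature_of_forall_X_pow (H : ∀ i : Fin (d + 1),
    h i = ∑ P ∈ S, w P * pointEval d P (Polynomial.X ^ (i : ℕ))) : IsQuadrature h S w := by
  intro p hp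
  rw [momentFunctional_eq_of_forall_X_pow (φ := ∑ P ∈ S, w P • pointEval d P) _ hp]
  · simp only [LinearMap.sum_apply, LinearMap.smul_apply, smul_eq_mul]
  · simpa only [LinearMap.sum_apply, LinearMap.smul_apply, smul_eq_mul] using fun i => (H i).symm

lemma exists_pow_mul_pow_eq_mul_pointEval (d : ℕ) (a b : K) : ∃ (P : Option K) (c : K),
    ∀ i ≤ d, a ^ (d - i) * b ^ i = c * pointEval d P (Polynomial.X ^ i) := by
  rcases eq_or_ne a 0 with rfl | ha
  · refine ⟨none, b ^ d, fun i hi => ?_⟩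
    rcases hi.eq_or_lt with rfl | hi
    · simp [pointEval_none]
    · simp [pointEval_none, Polynomial.coeff_X_pow, hi.ne', (Nat.sub_pos_of_lt hi).ne']
  · refine ⟨some (b / a), a ^ d, fun i hi => ?_⟩
    rw [pointEval_some, Polynomial.eval_pow, Polynomial.eval_X, div_pow, pow_sub₀ a ha hi]
    ring

lemma exists_isQuadrature (hh : h ∈ powerSumSet d k) :
    ∃ S w, S.card ≤ k ∧ (∀ P ∈ S, w P ≠ 0) ∧ IsQuadrature h S w := by
  classical
  obtain ⟨ab, hab⟩ := hh
  choose P c hPc using fun l => exists_pow_mul_pow_eq_mul_pointEval d (ab l).1 (ab l).2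
  let w (Q : Option K) : K := ∑ l with P l = Q, c l
  refine ⟨(Finset.univ.image P).filter (w · ≠ 0), w,
    (Finset.card_filter_le _ _).trans (Finset.card_image_le.trans (by simp)), by simp,
    isQuadrature_of_forall_X_pow fun i => ?_⟩
  rw [Finset.sum_filter_of_ne fun Q _ hQ => left_ne_zero_of_mul hQ, hab,
    ← Finset.sum_fiberwise_of_maps_to (g := P) fun l hl => Finset.mem_image_of_mem P hl]
  refine Finset.sum_congr rfl fun Q _ => ?_
  rw [Finset.sum_mul]
  refine Finset.sum_congr rfl fun l hl => ?_
  rw [hPc l i (by omega), (Finset.mem_filter.1 hl).2]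

lemma IsQuadrature.prod_pointForm_mem_apolarForms (hL : IsQuadrature h S w) (hS : S.card ≤ d) :
    ∏ P ∈ S, pointForm P ∈ apolarForms h S.card := by
  refine ⟨natDegree_prod_pointForm_le S, fun q hq => ?_⟩
  rw [hL _ ((Polynomial.natDegree_mul_le_of_le (natDegree_prod_pointForm_le S) hq).trans
    (by omega))]
  refine Finset.sum_eq_zero fun P hP => ?_
  rw [pointEval_mul P (natDegree_prod_pointForm_le S) hq (by omega),
    pointEval_prod_pointForm_eq_zero_iff.2 hP, zero_mul, mul_zero]

/-- Test `f` against a form of degree `d - r` vanishing at all nodes except `P`. -/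
lemma IsQuadrature.pointEval_eq_zero (hL : IsQuadrature h S w) (hw : ∀ P ∈ S, w P ≠ 0)
    (hS : S.card + r ≤ d + 1) (hf : f ∈ apolarForms h r) {P : Option K} (hP : P ∈ S) :
    pointEval r P f = 0 := by
  classical
  have hcard := Finset.card_erase_add_one hP
  obtain ⟨u, hu, huP⟩ := exists_pointEval_eq_one (d - r - (S.erase P).card) P
  let q := (∏ Q ∈ S.erase P, pointForm Q) * u
  have hprod := natDegree_prod_pointForm_le (S.erase P)
  have hq : q.natDegree ≤ d - r :=
    (Polynomial.natDegree_mul_le_of_le hprod hu).trans (by omega)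
  have hqeval (Q) : pointEval (d - r) Q q = 0 ↔
      Q ∈ S.erase P ∨ pointEval (d - r - (S.erase P).card) Q u = 0 := by
    rw [pointEval_mul Q hprod hu (by omega), mul_eq_zero, pointEval_prod_pointForm_eq_zero_iff]
  have hfq (Q) : pointEval d Q (f * q) = pointEval r Q f * pointEval (d - r) Q q :=
    pointEval_mul Q hf.1 hq (by omega)
  have hother : ∀ Q ∈ S, Q ≠ P → w Q * pointEval d Q (f * q) = 0 := fun Q hQ hQP => by
    rw [hfq, (hqeval Q).2 (Or.inl (Finset.mem_erase.2 ⟨hQP, hQ⟩)), mul_zero, mul_zero]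
  have hzero := hf.2 q hq
  rw [hL _ ((Polynomial.natDegree_mul_le_of_le hf.1 hq).trans (by omega)),
    Finset.sum_eq_single_of_mem P hP hother, hfq] at hzero
  have hqP : pointEval (d - r) P q ≠ 0 := by simp [hqeval, huP]
  exact (mul_eq_zero.1 ((mul_eq_zero.1 hzero).resolve_left (hw P hP))).resolve_right hqP

lemma notMem_powerSumSet (hrd : r ≤ d) (hmin : ∀ j < r, apolarForms h j = ⊥) (hf0 : f ≠ 0)
    (hf : f ∈ apolarForms h r)
    (hnsf : ∀ g ∈ apolarForms h r, g ≠ 0 → ¬ Squarefree (g.homogenize r))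
    (hk : k ≤ d - r + 1) : h ∉ powerSumSet d k := by
  intro hh
  obtain ⟨S, w, hSk, hw, hL⟩ := exists_isQuadrature hh
  have hSr : S.card ≤ r := card_le_of_pointEval_eq_zero hf0 hf.1 fun P hP =>
    hL.pointEval_eq_zero hw (by omega) hf hP
  have hg := hL.prod_pointForm_mem_apolarForms (hSr.trans hrd)
  have hg0 := prod_pointForm_ne_zero S
  obtain hlt | rfl := hSr.lt_or_eq
  · rw [hmin _ hlt] at hg
    exact hg0 ((Submodule.mem_bot K).1 hg)
  · exact hnsf _ hg hg0 (squarefree_homogenize_prod_pointForm S)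

theorem isLeast_powerSumSet [IsAlgClosed K] [CharZero K] (hr : 2 ≤ r) (hrd : r ≤ d)
    (hmin : ∀ j < r, apolarForms h j = ⊥) (hf0 : f ≠ 0) (hf : f ∈ apolarForms h r)
    (hnsf : ∀ g ∈ apolarForms h r, g ≠ 0 → ¬ Squarefree (g.homogenize r)) :
    IsLeast {k | h ∈ powerSumSet d k} (d - r + 2) := by
  refine ⟨?_, fun k hk => ?_⟩
  · obtain ⟨g, hg, hsq, hdeg⟩ := exists_squarefree_mem_apolarForms (t := d - r + 2) (by omega)
      (by omega) (hmin _ (by omega))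
    exact mem_powerSumSet_of_squarefree (by omega) hsq hg hdeg
  · by_contra! hlt
    exact notMem_powerSumSet hrd hmin hf0 hf hnsf (by omega) hk

end Quadrature

/-! ### Tensors -/

section Tensors

variable {m n p q k : ℕ}

lemma vandSet_subset_symSet (m n k : ℕ) : vandSet m n k ⊆ symSet m n k :=
  fun _ ⟨ab, h⟩ => ⟨fun l => vand n (ab l).1 (ab l).2, h⟩

lemma symSet_subset_cpSet (m n k : ℕ) : symSet m n k ⊆ cpSet m n k :=
  fun _ ⟨v, h⟩ => ⟨fun l _ => v l, h⟩

lemma prod_vand (a b : ℂ) (i : Fin m → Fin n) :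
    ∏ j, vand n a b (i j) = a ^ ((n - 1) * m - ∑ j, (i j : ℕ)) * b ^ ∑ j, (i j : ℕ) := by
  simp only [vand, Finset.prod_mul_distrib, Finset.prod_pow_eq_pow_sum]
  rw [Finset.sum_tsub_distrib _ fun j _ => Nat.le_sub_one_of_lt (i j).isLt, Finset.sum_const,
    Finset.card_univ, Fintype.card_fin, smul_eq_mul, mul_comm m]

lemma sum_val_le (i : Fin m → Fin n) : ∑ j, (i j : ℕ) ≤ (n - 1) * m := by
  have := Finset.sum_le_card_nsmul Finset.univ (fun j => (i j : ℕ)) (n - 1) fun j _ => by omega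
  simpa [mul_comm] using this

lemma exists_sum_val_eq {v : ℕ} (hn : 1 ≤ n) (hv : v ≤ (n - 1) * m) :
    ∃ i : Fin m → Fin n, ∑ j, (i j : ℕ) = v := by
  induction m generalizing v with
  | zero => exact ⟨Fin.elim0, by simpa using (Nat.le_zero.1 hv).symm⟩
  | succ m ih =>
    obtain ⟨i, hi⟩ := ih (v := v - min v (n - 1)) (by rw [mul_add_one] at hv; omega)
    refine ⟨Fin.cons ⟨min v (n - 1), by omega⟩ i, ?_⟩
    simp only [Fin.sum_univ_succ, Fin.cons_zero, Fin.cons_succ, hi]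
    omega

lemma IsHankel.apply_of_sum_val_eq {T : Tensor m n} {h : Fin ((n - 1) * m + 1) → ℂ}
    (hT : IsHankel T h) {i : Fin m → Fin n} {v : Fin ((n - 1) * m + 1)}
    (hi : ∑ j, (i j : ℕ) = v) : T i = h v :=
  (hT i).trans (congrArg h (Fin.ext hi))

lemma IsHankel.mem_vandSet_iff (hn : 1 ≤ n) {T : Tensor m n} {h : Fin ((n - 1) * m + 1) → ℂ}
    (hT : IsHankel T h) : T ∈ vandSet m n k ↔ h ∈ powerSumSet ((n - 1) * m) k := by
  refine exists_congr fun ab => ?_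
  simp only [prod_vand]
  refine ⟨fun H v => ?_, fun H i => (hT i).trans (H _)⟩
  obtain ⟨i, hi⟩ := exists_sum_val_eq hn (Nat.le_of_lt_succ v.isLt)
  rw [← hT.apply_of_sum_val_eq hi, H, hi]

lemma IsHankel.mem_closure_vandSet (hn : 1 ≤ n) {T : Tensor m n} {h : Fin ((n - 1) * m + 1) → ℂ}
    (hT : IsHankel T h) (hh : h ∈ closure (powerSumSet ((n - 1) * m) k)) :
    T ∈ closure (vandSet m n k) := by
  let hankel (u : Fin ((n - 1) * m + 1) → ℂ) : Tensor m n :=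
    fun i => u ⟨∑ j, (i j : ℕ), Nat.lt_succ_of_le (sum_val_le i)⟩
  have hcont : Continuous hankel := by fun_prop
  rw [show T = hankel h from funext hT]
  refine map_mem_closure hcont hh fun u hu => ?_
  exact (IsHankel.mem_vandSet_iff (T := hankel u) hn fun _ => rfl).2 hu

/-- The flattening of a tensor of order `q + p`: the first `q` indices label the rows, the last `p`
indices the columns. -/
def flatten (T : Tensor (q + p) n) : Matrix (Fin q → Fin n) (Fin p → Fin n) ℂ :=
  Matrix.of fun x y => T (Fin.append x y)

lemma rank_flatten_le_of_mem_cpSet {T : Tensor (q + p) n} (hT : T ∈ cpSet (q + p) n k) :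
    (flatten T).rank ≤ k := by
  obtain ⟨u, hu⟩ := hT
  have hfactor : flatten T =
      Matrix.of (fun (x : Fin q → Fin n) (l : Fin k) => ∏ j, u l (Fin.castAdd p j) (x j)) *
        Matrix.of fun (l : Fin k) (y : Fin p → Fin n) => ∏ j, u l (Fin.natAdd q j) (y j) := by
    ext x y
    simp only [flatten, hu, Fin.prod_univ_add, Fin.append_left, Fin.append_right, Matrix.mul_apply,
      Matrix.of_apply]
  rw [hfactor]
  exact (Matrix.rank_mul_le_left _ _).trans
    ((Matrix.rank_le_card_width _).trans_eq (Fintype.card_fin k))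

lemma isClosed_setOf_rank_le {ι κ : Type*} [Finite ι] [Fintype κ] (k : ℕ) :
    IsClosed {M : Matrix ι κ ℂ | M.rank ≤ k} := by
  classical
  have := Fintype.ofFinite ι
  let toCLM : Matrix ι κ ℂ →ₗ[ℂ] (κ → ℂ) →L[ℂ] (ι → ℂ) :=
    LinearMap.toContinuousLinearMap.toLinearMap ∘ₗ Matrix.toLin'.toLinearMap
  have hopen := (isOpen_setOfPred_nat_le_rank (𝕜 := ℂ) (E := κ → ℂ) (F := ι → ℂ) (k + 1)).preimage
    toCLM.continuous_of_finiteDimensional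
  convert hopen.isClosed_compl using 1
  ext M
  change M.rank ≤ k ↔ ¬ ((k + 1 : ℕ) : Cardinal) ≤ (Matrix.toLin' M).rank
  rw [LinearMap.rank, ← Module.finrank_eq_rank, Nat.cast_le, Nat.succ_le_iff, not_lt, Matrix.rank,
    Matrix.toLin'_apply']

lemma rank_flatten_le_of_mem_closure_cpSet {T : Tensor (q + p) n}
    (hT : T ∈ closure (cpSet (q + p) n k)) : (flatten T).rank ≤ k := by
  have hcont : Continuous (flatten : Tensor (q + p) n → _) := by
    unfold flatten
    fun_prop
  exact closure_minimal (fun _ hT => rank_flatten_le_of_mem_cpSet hT)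
    ((isClosed_setOf_rank_le k).preimage hcont) hT

lemma IsHankel.rank_hMat_le_of_mem_closure_cpSet (hn : 1 ≤ n) (hp : p ≤ m) {T : Tensor m n}
    {h : Fin ((n - 1) * m + 1) → ℂ} (hT : IsHankel T h) (hk : T ∈ closure (cpSet m n k)) :
    (hMat ((n - 1) * m) ((n - 1) * p) h).rank ≤ k := by
  obtain ⟨q, rfl⟩ := Nat.exists_eq_add_of_le' hp
  have hd : (n - 1) * (q + p) = (n - 1) * q + (n - 1) * p := mul_add _ _ _
  choose x hx using fun i : Fin ((n - 1) * (q + p) - (n - 1) * p + 1) =>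
    exists_sum_val_eq (n := n) (m := q) (v := i) hn (by omega)
  choose y hy using fun j : Fin ((n - 1) * p + 1) =>
    exists_sum_val_eq (n := n) (m := p) (v := j) hn (Nat.le_of_lt_succ j.isLt)
  have hsub : hMat ((n - 1) * (q + p)) ((n - 1) * p) h = (flatten T).submatrix x y := by
    ext i j
    have hsum : ∑ l, (Fin.append (x i) (y j) l).val = i + j := by
      simp only [Fin.sum_univ_add, Fin.append_left, Fin.append_right, hx, hy]
    exact (dif_pos (by omega)).trans (hT.apply_of_sum_val_eq hsum).symm
  rw [hsub]
  exact (Matrix.rank_submatrix_le _ _ _).trans (rank_flatten_le_of_mem_closure_cpSet hk)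

end Tensors

/-! ### Ranks of Hankel tensors -/

section Ranks

variable {m n p k d : ℕ}

lemma bSymRank_le_symRank {T : Tensor m n} (hT : T ∈ symSet m n k) : bSymRank T ≤ symRank T := by
  have hmem : T ∈ symSet m n (symRank T) :=
    Nat.sInf_mem (s := {r | T ∈ symSet m n r}) ⟨k, hT⟩
  exact Nat.sInf_le (subset_closure hmem)

lemma IsHankel.borderRanks_eq (hn : 1 ≤ n) (hp : p ≤ m) {T : Tensor m n}
    {h : Fin ((n - 1) * m + 1) → ℂ} (hT : IsHankel T h)
    (hk : k = (hMat ((n - 1) * m) ((n - 1) * p) h).rank)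
    (hh : h ∈ closure (powerSumSet ((n - 1) * m) k)) :
    bVandRank T = k ∧ bSymRank T = k ∧ brank T = k := by
  have hvandSym (j) := closure_mono (vandSet_subset_symSet m n j)
  have hsymCp (j) := closure_mono (symSet_subset_cpSet m n j)
  have hlower (j) (hj : T ∈ closure (cpSet m n j)) : k ≤ j :=
    hk.trans_le (hT.rank_hMat_le_of_mem_closure_cpSet hn hp hj)
  have hupper := hT.mem_closure_vandSet hn hh
  exact ⟨IsLeast.csInf_eq ⟨hupper, fun j hj => hlower j (hsymCp j (hvandSym j hj))⟩,
    IsLeast.csInf_eq ⟨hvandSym _ hupper, fun j hj => hlower j (hsymCp j hj)⟩,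
    IsLeast.csInf_eq ⟨hsymCp _ (hvandSym _ hupper), hlower⟩⟩

lemma exists_mem_apolarForms_ne_zero {h : Fin (d + 1) → ℂ}
    (hker : ∃ f : Fin (k + 1) → ℂ, f ≠ 0 ∧ (hMat d k h).mulVec f = 0) :
    ∃ p ∈ apolarForms h k, p ≠ 0 := by
  classical
  obtain ⟨f, hf0, hf⟩ := hker
  exact ⟨Polynomial.ofFn (k + 1) f, (hMat_mulVec_eq_zero_iff f).1 hf,
    (map_ne_zero_iff _ (Polynomial.injective_ofFn _)).2 hf0⟩

lemma not_squarefree_homogenize_of_mem_apolarForms {h : Fin (d + 1) → ℂ}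
    (hnsf : ∀ f : Fin (k + 1) → ℂ, f ≠ 0 → (hMat d k h).mulVec f = 0 → ¬ Squarefree (binForm k f))
    {p : Polynomial ℂ} (hp : p ∈ apolarForms h k) (hp0 : p ≠ 0) :
    ¬ Squarefree (p.homogenize k) := by
  classical
  have hofFn := Polynomial.ofFn_comp_toFn_eq_id_of_natDegree_lt (Nat.lt_succ_of_le hp.1)
  rw [← hofFn] at hp hp0 ⊢
  rw [← squarefree_binForm_iff]
  refine hnsf _ ?_ ((hMat_mulVec_eq_zero_iff _).2 hp)
  intro h0
  rw [h0, map_zero] at hp0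
  exact hp0 rfl

end Ranks

/-- The catalecticant need not be balanced, nor the order even: any catalecticant that is a
flattening of `H` bounds the border rank from below. -/
theorem stmt_9_general {m n p : ℕ} (hp : p ≤ m) (H : Tensor m n)
    (h : Fin ((n - 1) * m + 1) → ℂ) (hH : IsHankel H h) (r : ℕ)
    (hr : r = (hMat ((n - 1) * m) ((n - 1) * p) h).rank)
    (hker : ∃ f : Fin (r + 1) → ℂ, f ≠ 0 ∧ (hMat ((n - 1) * m) r h).mulVec f = 0)
    (hnsf : ∀ f : Fin (r + 1) → ℂ, f ≠ 0 →
      (hMat ((n - 1) * m) r h).mulVec f = 0 → ¬ Squarefree (binForm r f)) :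
    vandRank H = (n - 1) * m - r + 2 ∧
      bVandRank H = r ∧ bSymRank H = r ∧ brank H = r ∧
      r ≤ symRank H ∧ symRank H ≤ (n - 1) * m - r + 2 := by
  obtain ⟨f, hf, hf0⟩ := exists_mem_apolarForms_ne_zero hker
  have hnsf' (g) (hg : g ∈ apolarForms h r) (hg0 : g ≠ 0) :=
    not_squarefree_homogenize_of_mem_apolarForms hnsf hg hg0
  have hsd : (n - 1) * p ≤ (n - 1) * m := Nat.mul_le_mul_left _ hp
  have hr2 : 2 ≤ r := by
    by_contra! hlt
    exact hnsf' f hf hf0 (squarefree_homogenize_of_le_one (by omega) hf0 hf.1)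
  have hrd : r ≤ (n - 1) * m := by
    have := hr.trans_le (Matrix.rank_le_width _)
    have := hr.trans_le (Matrix.rank_le_height _)
    omega
  have hn : 1 ≤ n := by
    refine Nat.one_le_iff_ne_zero.2 ?_
    rintro rfl
    rw [Nat.zero_sub, zero_mul] at hrd
    omega
  have hmin (j) (hj : j < r) : apolarForms h j = ⊥ := apolarForms_eq_bot_of_lt_rank hsd (hr ▸ hj)
  have hleast := isLeast_powerSumSet hr2 hrd hmin hf0 hf hnsf'
  simp only [← hH.mem_vandSet_iff hn] at hleast
  obtain ⟨hbVand, hbSym, hb⟩ :=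
    hH.borderRanks_eq hn hp hr (mem_closure_powerSumSet (by omega) hrd hf0 hf)
  have hsym := vandSet_subset_symSet _ _ _ hleast.1
  exact ⟨hleast.csInf_eq, hbVand, hbSym, hb, hbSym ▸ bSymRank_le_symRank hsym,
    Nat.sInf_le hsym⟩


/-- Even order: if `r < s+1` and every nonzero kernel vector has a
non-squarefree binary form, then `rank_V(H) = d-r+2`, the border ranks equal `r`,
and `r ≤ rank_S(H) ≤ d-r+2`. -/
theorem stmt_9 (n m₀ : ℕ) (hn : 2 ≤ n) (hm : 1 ≤ m₀)
    (H : Tensor (2 * m₀) n) (h : Fin ((n - 1) * (2 * m₀) + 1) → ℂ) (hH : IsHankel H h)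
    (r : ℕ) (hr : r = (hMat ((n - 1) * (2 * m₀)) ((n - 1) * m₀) h).rank)
    (hrs : r < (n - 1) * m₀ + 1)
    (hker : ∃ f : Fin (r + 1) → ℂ, f ≠ 0 ∧ (hMat ((n - 1) * (2 * m₀)) r h).mulVec f = 0)
    (hnsf : ∀ f : Fin (r + 1) → ℂ, f ≠ 0 →
      (hMat ((n - 1) * (2 * m₀)) r h).mulVec f = 0 → ¬ Squarefree (binForm r f)) :
    vandRank H = (n - 1) * (2 * m₀) - r + 2 ∧
      bVandRank H = r ∧ bSymRank H = r ∧ brank H = r ∧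
      r ≤ symRank H ∧ symRank H ≤ (n - 1) * (2 * m₀) - r + 2 :=
  stmt_9_general (by omega) H h hH r hr hker hnsf
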